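/- Let a, b be positive integers with a ≤ b. The quadratic form f^{a,b}_4(x,y,z,w) = a·x² + b·y² + 4·(z² + z·w + w²) represents every nonnegative integer (with x, y, z, w ∈ ℤ) if and only if a = 1 and b = 2. -/

import Mathlib

/-! Necessity is a comparison of small values: representing `1` forces `a = 1`, representing `2` forces
`b ≤ 2`, and `x² + y² + 4(…)` never equals `3`.

For sufficiency, `z² + zw + w²` with `z = s - t`, `w = 2t` equals `s² + 3t²`, so it is enough to
represent every `n` by `x² + 2y² + 4s² + 12t²`. This follows from the fact that every positive
integer congruent to `1` or `2` modulo `4` is a sum of three squares: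
* `n` odd: `2n = A² + B² + C²` with `A ≡ B [4]` odd and `C` even gives `n = x² + 2y² + 4s²`;
* `n = 2m` with `m` odd: either `m` or `m - 6` is `1` modulo `4`, and a sum of three squares that
  is odd has the shape `y² + 2x² + 2s²`;
* `n = 4k`: either `k` or `k - 3` is odd, and an odd number has the shape `x² + s² + 2y²`, since its
  double is a sum of three squares.

The three squares facts are proved by the argument of Dirichlet. If `d, h` are such that
`d n - 1` divides `h² + d`, there is a positive definite ternary form of determinant `1` taking the
value `n` (`sum_three_sq_of_dvd`); reduction theory shows that such a form is equivalent to a sum of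
three squares (`ternary_det_one`). Dirichlet's theorem on primes in arithmetic progressions
supplies a `d` for which `d n - 1` is a prime or twice a prime, and quadratic reciprocity supplies
`h`.
-/

/-! ### Reduction of binary and ternary forms -/

lemma exists_shift (a b : ℤ) (ha : 0 < a) :
    ∃ k : ℤ, -a ≤ 2 * (b + k * a) ∧ 2 * (b + k * a) ≤ a := by
  refine ⟨-((2 * b + a) / (2 * a)), ?_⟩
  have h1 := Int.emod_add_mul_ediv (2 * b + a) (2 * a)
  have h2 := Int.emod_nonneg (2 * b + a) (b := 2 * a) (by lia)
  have h3 := Int.emod_lt_of_pos (2 * b + a) (b := 2 * a) (by lia)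
  constructor <;> nlinarith

lemma four_mul_sq_le {a f : ℤ} (h1 : -a ≤ 2 * f) (h2 : 2 * f ≤ a) : 4 * f ^ 2 ≤ a ^ 2 := by
  nlinarith

/-- Gauss reduction: a positive definite form `A x² + 2 B x y + C y²` of determinant `D` is properly
equivalent to one whose leading coefficient `A'` satisfies `3 A'² ≤ 4 D`. -/
lemma binary_reduction (A B C D : ℤ) (hA : 0 < A) (hD : A * C - B ^ 2 = D) (hD0 : 0 < D) :
    ∃ p q r s : ℤ, p * s - q * r = 1 ∧ 0 < A * p ^ 2 + 2 * B * p * r + C * r ^ 2 ∧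
      3 * (A * p ^ 2 + 2 * B * p * r + C * r ^ 2) ^ 2 ≤ 4 * D := by
  induction hN : A.toNat using Nat.strong_induction_on generalizing A B C with
  | _ N ih =>
    obtain ⟨k, hk1, hk2⟩ := exists_shift A B hA
    have hdet : A * (A * k ^ 2 + 2 * B * k + C) = D + (B + k * A) ^ 2 := by
      rw [← hD]; ring
    have hsq : 4 * (B + k * A) ^ 2 ≤ A ^ 2 := four_mul_sq_le hk1 hk2
    by_cases hC : A ≤ A * k ^ 2 + 2 * B * k + C
    · refine ⟨1, 0, 0, 1, by norm_num, by simpa using hA, ?_⟩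
      have : A * A ≤ A * (A * k ^ 2 + 2 * B * k + C) := by gcongr
      have e : A * 1 ^ 2 + 2 * B * 1 * 0 + C * 0 ^ 2 = A := by ring
      rw [e]
      nlinarith
    · push Not at hC
      have hC0 : 0 < A * k ^ 2 + 2 * B * k + C := by
        have : 0 < A * (A * k ^ 2 + 2 * B * k + C) := by rw [hdet]; positivity
        exact pos_of_mul_pos_right this hA.le
      obtain ⟨p, q, r, s, h1, h2, h3⟩ := ih (A * k ^ 2 + 2 * B * k + C).toNat (by lia)
        (A * k ^ 2 + 2 * B * k + C) (-(B + k * A)) A hC0 (by rw [← hD]; ring) rfl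
      have e : A * (k * p - r) ^ 2 + 2 * B * (k * p - r) * p + C * p ^ 2 =
        (A * k ^ 2 + 2 * B * k + C) * p ^ 2 + 2 * (-(B + k * A)) * p * r + A * r ^ 2 := by ring
      exact ⟨k * p - r, k * q - s, p, q, by linarith, by rw [e]; exact h2, by rw [e]; exact h3⟩

lemma binary_det_one (A B C : ℤ) (hA : 0 < A) (hD : A * C - B ^ 2 = 1) (y z : ℤ) :
    ∃ v w : ℤ, A * y ^ 2 + 2 * B * y * z + C * z ^ 2 = v ^ 2 + w ^ 2 := by
  obtain ⟨p, q, r, s, h1, h2, h3⟩ := binary_reduction A B C 1 hA hD one_pos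
  have hone : A * p ^ 2 + 2 * B * p * r + C * r ^ 2 = 1 := by nlinarith
  -- In the new basis the form is `Y² + 2 B' Y Z + C' Z²` with `C' - B'² = 1`.
  set B' := A * p * q + B * (p * s + q * r) + C * r * s with hB'
  set C' := A * q ^ 2 + 2 * B * q * s + C * s ^ 2 with hC'
  have hdet : C' - B' ^ 2 = 1 := by
    have : (A * p ^ 2 + 2 * B * p * r + C * r ^ 2) * C' - B' ^ 2
        = (A * C - B ^ 2) * (p * s - q * r) ^ 2 := by rw [hB', hC']; ring
    rw [hone, hD, h1] at this
    linarith
  refine ⟨(s * y - q * z) + B' * (p * z - r * y), p * z - r * y, ?_⟩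
  have hy : y = p * (s * y - q * z) + q * (p * z - r * y) := by linear_combination (-y) * h1
  have hz : z = r * (s * y - q * z) + s * (p * z - r * y) := by linear_combination (-z) * h1
  generalize s * y - q * z = Y at *
  generalize p * z - r * y = Z at *
  have : A * y ^ 2 + 2 * B * y * z + C * z ^ 2 =
      (A * p ^ 2 + 2 * B * p * r + C * r ^ 2) * Y ^ 2 + 2 * B' * Y * Z + C' * Z ^ 2 := by
    rw [hy, hz, hB', hC']; ring
  rw [this, hone]
  linear_combination Z ^ 2 * hdet

/-- The ternary form with Gram matrix `!![a, f, e; f, b, d; e, d, c]`. -/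
def ternary (a b c d e f x y z : ℤ) : ℤ :=
  a * x ^ 2 + b * y ^ 2 + c * z ^ 2 + 2 * d * y * z + 2 * e * x * z + 2 * f * x * y

/-- The inequality behind the descent in `ternary_det_one`: if `b ≥ a`, then `3 a² ≤ 4 A`, which
together with `3 A² ≤ 4 a` forces `a = 1`. -/
lemma lt_of_reduced (a A b f : ℤ) (ha : 0 < a) (ha1 : a ≠ 1) (hA : 0 < A)
    (hA2 : 3 * A ^ 2 ≤ 4 * a) (hab : a * b = A + f ^ 2) (hf : 4 * f ^ 2 ≤ a ^ 2) : b < a := by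
  by_contra! hge
  have h0 : a * a ≤ a * b := by gcongr
  have h4 : 3 * a ^ 2 ≤ 4 * A := by nlinarith
  have h5 : 2 ≤ a := by lia
  have h6 : 3 * a ≤ 2 * A := by nlinarith
  nlinarith

/-- A positive definite integral ternary form of determinant `1` only takes values that are sums of
three squares. The proof decreases the leading coefficient `a` until it equals `1`, using that
`a * ternary … = (a x + f y + e z)² + G(y, z)` with `G` a binary form of determinant `a`. -/
lemma ternary_det_one (a b c d e f : ℤ) (ha : 0 < a) (hab : 0 < a * b - f ^ 2)
    (hdet : a * b * c + 2 * d * e * f - a * d ^ 2 - b * e ^ 2 - c * f ^ 2 = 1) (x y z : ℤ) :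
    ∃ u v w : ℤ, ternary a b c d e f x y z = u ^ 2 + v ^ 2 + w ^ 2 := by
  induction hN : a.toNat using Nat.strong_induction_on generalizing a b c d e f x y z with
  | _ N ih =>
    by_cases ha1 : a = 1
    · subst ha1
      obtain ⟨v, w, h⟩ := binary_det_one (b - f ^ 2) (d - e * f) (c - e ^ 2) (by linarith)
        (by linear_combination hdet) y z
      refine ⟨x + f * y + e * z, v, w, ?_⟩
      rw [ternary]
      linear_combination h
    · obtain ⟨p, q, r, s, h1, h2, h3⟩ := binary_reduction (a * b - f ^ 2) (a * d - e * f)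
        (a * c - e ^ 2) a hab (by linear_combination a * hdet) ha
      obtain ⟨k, hk1, hk2⟩ := exists_shift a (f * p + e * r) ha
      -- `A'` is the reduced leading coefficient of `G`; `f', b'` and the others below are the
      -- coefficients after the base change on `(y, z)` and the shift `x ↦ x + k y`.
      set A' := (a * b - f ^ 2) * p ^ 2 + 2 * (a * d - e * f) * p * r + (a * c - e ^ 2) * r ^ 2
        with hA'
      set f' := f * p + e * r + k * a with hf'
      obtain ⟨b', hb'⟩ : ∃ b', b' = b * p ^ 2 + 2 * d * p * r + c * r ^ 2 +
        2 * k * (f * p + e * r) + k ^ 2 * a := ⟨_, rfl⟩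
      obtain ⟨c', hc'⟩ : ∃ c', c' = b * q ^ 2 + 2 * d * q * s + c * s ^ 2 := ⟨_, rfl⟩
      obtain ⟨e', he'⟩ : ∃ e', e' = f * q + e * s := ⟨_, rfl⟩
      obtain ⟨d', hd'⟩ : ∃ d', d' = b * p * q + d * (p * s + q * r) + c * r * s + k * e' :=
        ⟨_, rfl⟩
      have hA'' : a * b' = A' + f' ^ 2 := by rw [hb', hA', hf']; ring
      have hsq : 4 * f' ^ 2 ≤ a ^ 2 := four_mul_sq_le hk1 hk2
      have hlt : b' < a := lt_of_reduced a A' b' f' ha ha1 h2 h3 hA'' hsq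
      have hpos : 0 < b' := by
        have : 0 < a * b' := by rw [hA'']; positivity
        exact pos_of_mul_pos_right this ha.le
      have hdet' : b' * a * c' + 2 * e' * d' * f' - b' * e' ^ 2 - a * d' ^ 2 - c' * f' ^ 2 = 1 := by
        have : b' * a * c' + 2 * e' * d' * f' - b' * e' ^ 2 - a * d' ^ 2 - c' * f' ^ 2 =
          (a * b * c + 2 * d * e * f - a * d ^ 2 - b * e ^ 2 - c * f ^ 2) *
            (p * s - q * r) ^ 2 := by
          rw [hb', hc', hd', he', hf']; ring
        rw [this, hdet, h1]; norm_num
      obtain ⟨u, v, w, huvw⟩ := ih b'.toNat (by lia) b' a c' e' d' f' hpos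
        (by rw [mul_comm, hA'']; linarith) hdet' (s * y - q * z) (x - k * (s * y - q * z))
        (p * z - r * y) rfl
      refine ⟨u, v, w, ?_⟩
      rw [← huvw]
      have hy : y = p * (s * y - q * z) + q * (p * z - r * y) := by linear_combination (-y) * h1
      have hz : z = r * (s * y - q * z) + s * (p * z - r * y) := by linear_combination (-z) * h1
      generalize s * y - q * z = Y at *
      generalize p * z - r * y = Z at *
      rw [ternary, ternary, hy, hz, hb', hc', hd', he', hf']
      ring

/-! ### Sums of three squares -/

lemma sum_three_sq_of_dvd (n d h : ℤ) (hd : 0 < d) (hdn : 1 < d * n)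
    (hdvd : d * n - 1 ∣ h ^ 2 + d) : ∃ u v w : ℤ, n = u ^ 2 + v ^ 2 + w ^ 2 := by
  obtain ⟨a, ha⟩ := hdvd
  have ha0 : 0 < a := by
    have : 0 < (d * n - 1) * a := by rw [← ha]; positivity
    exact pos_of_mul_pos_right this (by linarith)
  obtain ⟨u, v, w, h⟩ := ternary_det_one a (d * n - 1) n 0 1 h ha0 (by nlinarith)
    (by linear_combination (-n) * ha) 0 0 1
  refine ⟨u, v, w, ?_⟩
  rw [← h, ternary]
  ring

lemma exists_dvd_sq_sub_of_jacobiSym {p : ℕ} (hp : p.Prime) {m : ℤ} (h : jacobiSym m p = 1) :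
    ∃ t : ℤ, (p : ℤ) ∣ t ^ 2 - m := by
  have := Fact.mk hp
  obtain ⟨r, hr⟩ := ZMod.isSquare_of_jacobiSym_eq_one h
  refine ⟨r.valMinAbs, ?_⟩
  rw [← ZMod.intCast_zmod_eq_zero_iff_dvd]
  push_cast
  rw [hr]
  ring

/-- Here `d ≡ 1 [4]` is chosen so that `d n - 1` is a prime `p ≡ 1 [4]`; then
`(-d / p) = (d / p) = (p / d) = (-1 / d) = 1`. -/
lemma sum_three_sq_two_mod_four (n : ℕ) (hn : n % 4 = 2) :
    ∃ u v w : ℤ, (n : ℤ) = u ^ 2 + v ^ 2 + w ^ 2 := by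
  have hcop : (n - 1).Coprime (4 * n) := by
    refine Nat.Coprime.mul_right ?_ ?_
    · have : Odd (n - 1) := Nat.odd_iff.mpr (by lia)
      exact (Nat.Coprime.pow_right 2 (Nat.coprime_two_right.mpr this) : (n - 1).Coprime (2 ^ 2))
    · have := Nat.coprime_self_add_right (m := n - 1) (n := 1)
      rw [Nat.sub_add_cancel (by lia)] at this
      simpa using this
  obtain ⟨p, hpn, hp, hmod⟩ := Nat.forall_exists_prime_gt_and_modEq n (by lia) hcop
  obtain ⟨m, hm⟩ := (Nat.modEq_iff_dvd' (by lia)).mp hmod.symm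
  have hpd : (4 * m + 1) * n = p + 1 := by
    have : p = 4 * n * m + (n - 1) := by lia
    zify [show 1 ≤ n by lia] at this ⊢
    rw [this]; ring
  have hp4 : p % 4 = 1 := by
    obtain ⟨j, hj⟩ : ∃ j, n = 4 * j + 2 := ⟨n / 4, by lia⟩
    rw [hj] at hpd
    ring_nf at hpd
    lia
  have hd4 : (4 * m + 1) % 4 = 1 := by lia
  have hdodd : Odd (4 * m + 1) := Nat.odd_iff.mpr (by lia)
  have hpodd : Odd p := Nat.odd_iff.mpr (by lia)
  have hJ : jacobiSym (-((4 * m + 1 : ℕ) : ℤ)) p = 1 := by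
    rw [jacobiSym.neg _ hpodd, ZMod.χ₄_nat_one_mod_four hp4, one_mul,
      jacobiSym.quadratic_reciprocity_one_mod_four hd4 hpodd]
    have : jacobiSym (p : ℤ) (4 * m + 1) = jacobiSym (-1) (4 * m + 1) := by
      apply jacobiSym.mod_left'
      rw [← Int.ModEq, Int.modEq_iff_dvd]
      refine ⟨-n, ?_⟩
      zify at hpd
      push_cast
      linear_combination hpd
    rw [this, jacobiSym.at_neg_one hdodd, ZMod.χ₄_nat_one_mod_four hd4]
  obtain ⟨t, ht⟩ := exists_dvd_sq_sub_of_jacobiSym hp hJ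
  zify at hpd
  apply sum_three_sq_of_dvd n (4 * m + 1) t (by positivity)
  · rw [hpd]; have := hp.pos; lia
  · rw [hpd]
    rw [sub_neg_eq_add] at ht
    simpa using ht

/-- Here `d ≡ 3 [8]` is chosen so that `d n - 1 = 2 p` with `p` an odd prime; then
`(-d / p) = (p / d) = (-2 / d) (p / d) = (-2 p / d) = (1 / d) = 1`. -/
lemma sum_three_sq_one_mod_four (n : ℕ) (hn : n % 4 = 1) :
    ∃ u v w : ℤ, (n : ℤ) = u ^ 2 + v ^ 2 + w ^ 2 := by
  obtain ⟨c, hc⟩ : ∃ c, 3 * n = 2 * c + 1 := ⟨(3 * n - 1) / 2, by lia⟩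
  have hcop : c.Coprime (4 * n) := by
    refine Nat.Coprime.mul_right ?_ ?_
    · have : Odd c := Nat.odd_iff.mpr (by lia)
      exact (Nat.Coprime.pow_right 2 (Nat.coprime_two_right.mpr this) : c.Coprime (2 ^ 2))
    · rw [← Nat.isCoprime_iff_coprime]
      exact ⟨-2, 3, by zify at hc; linear_combination hc⟩
  obtain ⟨p, hpn, hp, hmod⟩ := Nat.forall_exists_prime_gt_and_modEq (c + 2) (by lia) hcop
  obtain ⟨m, hm⟩ := (Nat.modEq_iff_dvd' (by lia)).mp hmod.symm
  have hpd : (8 * m + 3) * n = 2 * p + 1 := by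
    have : p = 4 * n * m + c := by lia
    zify at this hc ⊢
    rw [this]; linear_combination hc
  have hpodd : Odd p := hp.odd_of_ne_two (by lia)
  have hdodd : Odd (8 * m + 3) := Nat.odd_iff.mpr (by lia)
  have h1 : jacobiSym (-((8 * m + 3 : ℕ) : ℤ)) p = jacobiSym p (8 * m + 3) := by
    rw [jacobiSym.neg _ hpodd]
    rcases Nat.odd_mod_four_iff.mp (Nat.odd_iff.mp hpodd) with h4 | h4
    · rw [ZMod.χ₄_nat_one_mod_four h4, one_mul,
        jacobiSym.quadratic_reciprocity_one_mod_four' hdodd h4]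
    · rw [ZMod.χ₄_nat_three_mod_four h4,
        jacobiSym.quadratic_reciprocity_three_mod_four (by lia) h4]
      ring
  have h2 : jacobiSym (-2) (8 * m + 3) = 1 := by
    rw [jacobiSym.at_neg_two hdodd, ZMod.χ₈'_nat_eq_if_mod_eight]
    have e1 : (8 * m + 3) % 2 = 1 := by lia
    have e2 : (8 * m + 3) % 8 = 3 := by lia
    simp [e1, e2]
  have h3 : jacobiSym (-2 * p) (8 * m + 3) = 1 := by
    rw [← jacobiSym.one_left (8 * m + 3)]
    apply jacobiSym.mod_left'
    rw [← Int.ModEq, Int.modEq_iff_dvd]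
    refine ⟨n, ?_⟩
    zify at hpd
    push_cast
    linear_combination -hpd
  rw [jacobiSym.mul_left, h2, one_mul] at h3
  obtain ⟨t, ht⟩ := exists_dvd_sq_sub_of_jacobiSym hp (h1.trans h3)
  rw [sub_neg_eq_add] at ht
  push_cast at ht
  -- Replacing `t` by `t + p` if necessary makes `t² + d` even as well.
  obtain ⟨h, hh, h2dvd⟩ : ∃ h : ℤ, (p : ℤ) ∣ h ^ 2 + (8 * m + 3) ∧ Odd h := by
    rcases Int.even_or_odd t with he | ho
    · refine ⟨t + p, ?_, he.add_odd (by exact_mod_cast hpodd)⟩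
      have : (t + p : ℤ) ^ 2 + (8 * m + 3) = (t ^ 2 + (8 * m + 3)) + p * (2 * t + p) := by ring
      rw [this]
      exact ht.add (dvd_mul_right _ _)
    · exact ⟨t, ht, ho⟩
  have h2d : (2 : ℤ) ∣ h ^ 2 + (8 * m + 3) := by
    obtain ⟨j, rfl⟩ := h2dvd
    exact ⟨2 * j ^ 2 + 2 * j + 4 * m + 2, by ring⟩
  have hcop2 : IsCoprime (2 : ℤ) p := by
    have := Nat.isCoprime_iff_coprime.mpr (Nat.coprime_two_left.mpr hpodd)
    exact_mod_cast this
  zify at hpd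
  apply sum_three_sq_of_dvd n (8 * m + 3) h (by positivity)
  · rw [hpd]; have := hp.pos; lia
  · rw [hpd, add_sub_cancel_right]
    exact hcop2.mul_dvd h2d hh

/-! ### Ternary diagonal forms -/

/-- If `m` is odd and `2 m` is a sum of three squares, exactly one of the squares is even. -/
lemma odd_two_mul_shape (m : ℕ) (hm : m % 2 = 1) :
    ∃ A B C : ℤ, 2 * (m : ℤ) = (2 * A + 1) ^ 2 + (2 * B + 1) ^ 2 + (2 * C) ^ 2 := by
  obtain ⟨u, v, w, h⟩ := sum_three_sq_two_mod_four (2 * m) (by lia)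
  push_cast at h
  have hm' : (2 * (m : ℤ)) % 4 = 2 := by lia
  rcases Int.even_or_odd' u with ⟨u, rfl | rfl⟩ <;> rcases Int.even_or_odd' v with ⟨v, rfl | rfl⟩ <;>
    rcases Int.even_or_odd' w with ⟨w, rfl | rfl⟩ <;> ring_nf at h
  · lia
  · lia
  · lia
  · exact ⟨v, w, u, by rw [mul_comm, h]; ring⟩
  · lia
  · exact ⟨u, w, v, by rw [mul_comm, h]; ring⟩
  · exact ⟨u, v, w, by rw [mul_comm, h]; ring⟩
  · lia

lemma odd_eq_one_one_two (m : ℕ) (hm : m % 2 = 1) :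
    ∃ x s y : ℤ, (m : ℤ) = x ^ 2 + s ^ 2 + 2 * y ^ 2 := by
  obtain ⟨A, B, C, h⟩ := odd_two_mul_shape m hm
  exact ⟨A + B + 1, A - B, C, by linarith⟩

lemma odd_eq_one_two_four (m : ℕ) (hm : m % 2 = 1) :
    ∃ x y s : ℤ, (m : ℤ) = x ^ 2 + 2 * y ^ 2 + 4 * s ^ 2 := by
  obtain ⟨x, s, y, h⟩ := odd_eq_one_one_two m hm
  rcases Int.even_or_odd' x with ⟨x, rfl | rfl⟩ <;> rcases Int.even_or_odd' s with ⟨s, rfl | rfl⟩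
  · ring_nf at h; lia
  · exact ⟨2 * s + 1, y, x, by rw [h]; ring⟩
  · exact ⟨2 * x + 1, y, s, by rw [h]; ring⟩
  · ring_nf at h; lia

lemma one_mod_four_eq_one_two_two (m : ℕ) (hm : m % 4 = 1) :
    ∃ y x s : ℤ, (m : ℤ) = y ^ 2 + 2 * x ^ 2 + 2 * s ^ 2 := by
  obtain ⟨u, v, w, h⟩ := sum_three_sq_one_mod_four m hm
  have key : ∀ y i j : ℤ, (m : ℤ) = y ^ 2 + i ^ 2 + j ^ 2 → i % 2 = j % 2 →
      ∃ y x s : ℤ, (m : ℤ) = y ^ 2 + 2 * x ^ 2 + 2 * s ^ 2 := by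
    intro y i j h hij
    obtain ⟨k, rfl⟩ : ∃ k, i = j + 2 * k := ⟨(i - j) / 2, by lia⟩
    exact ⟨y, j + k, k, by rw [h]; ring⟩
  -- Two of the three squares have equal parity.
  by_cases h1 : u % 2 = v % 2
  · exact key w u v (by rw [h]; ring) h1
  by_cases h2 : u % 2 = w % 2
  · exact key v u w (by rw [h]; ring) h2
  · exact key u v w h (by lia)

/-! ### The quaternary form -/

lemma exists_one_two_four_twelve (n : ℕ) :
    ∃ x y s t : ℤ, (n : ℤ) = x ^ 2 + 2 * y ^ 2 + 4 * s ^ 2 + 12 * t ^ 2 := by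
  rcases Nat.even_or_odd' n with ⟨m, rfl | rfl⟩
  · rcases Nat.even_or_odd' m with ⟨k, rfl | rfl⟩
    · -- `4 k` with `k = x² + s² + 2 y² + 3 t²`
      have key : ∃ x s y t : ℤ, (k : ℤ) = x ^ 2 + s ^ 2 + 2 * y ^ 2 + 3 * t ^ 2 := by
        rcases Nat.mod_two_eq_zero_or_one k with h | h
        · by_cases hk : 4 ≤ k
          · obtain ⟨x, s, y, e⟩ := odd_eq_one_one_two (k - 3) (by lia)
            exact ⟨x, s, y, 1, by lia⟩
          · have : k = 0 ∨ k = 2 := by lia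
            rcases this with rfl | rfl
            · exact ⟨0, 0, 0, 0, by norm_num⟩
            · exact ⟨0, 0, 1, 0, by norm_num⟩
        · obtain ⟨x, s, y, e⟩ := odd_eq_one_one_two k h
          exact ⟨x, s, y, 0, by lia⟩
      obtain ⟨x, s, y, t, e⟩ := key
      exact ⟨2 * x, 2 * y, s, t, by push_cast; rw [e]; ring⟩
    · -- `2 m` with `m = y² + 2 x² + 2 s² + 6 t²` odd
      have key : ∃ y x s t : ℤ,
          ((2 * k + 1 : ℕ) : ℤ) = y ^ 2 + 2 * x ^ 2 + 2 * s ^ 2 + 6 * t ^ 2 := by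
        rcases Nat.mod_two_eq_zero_or_one k with h | h
        · obtain ⟨y, x, s, e⟩ := one_mod_four_eq_one_two_two (2 * k + 1) (by lia)
          exact ⟨y, x, s, 0, by lia⟩
        · by_cases hk : k = 1
          · subst hk
            exact ⟨1, 1, 0, 0, by norm_num⟩
          · obtain ⟨y, x, s, e⟩ := one_mod_four_eq_one_two_two (2 * k + 1 - 6) (by lia)
            exact ⟨y, x, s, 1, by lia⟩
      obtain ⟨y, x, s, t, e⟩ := key
      exact ⟨2 * x, y, s, t, by push_cast at e ⊢; rw [e]; ring⟩
  · obtain ⟨x, y, s, e⟩ := odd_eq_one_two_four (2 * m + 1) (by lia)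
    exact ⟨x, y, s, 0, by rw [e]; ring⟩

theorem stmt_16 (a b : ℕ) (ha : 0 < a) (hb : 0 < b) (hab : a ≤ b) :
    (∀ n : ℕ, ∃ x y z w : ℤ,
      (n : ℤ) = a * x ^ 2 + b * y ^ 2 + 4 * (z ^ 2 + z * w + w ^ 2)) ↔
    (a = 1 ∧ b = 2) := by
  constructor
  · intro H
    have hq : ∀ z w : ℤ, 0 ≤ z ^ 2 + z * w + w ^ 2 := fun z w => by
      nlinarith [sq_nonneg (z + w), sq_nonneg z, sq_nonneg w]
    have hsq : ∀ x : ℤ, x ^ 2 = 0 ∨ 1 ≤ x ^ 2 := fun x => by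
      have := sq_nonneg x
      lia
    have ha1 : a = 1 := by
      obtain ⟨x, y, z, w, h⟩ := H 1
      have := hq z w
      rcases hsq x with hx | hx <;> rcases hsq y with hy | hy
      · rw [hx, hy] at h; push_cast at h; lia
      · have : (b : ℤ) ≤ b * y ^ 2 := le_mul_of_one_le_right (by positivity) hy
        rw [hx] at h; push_cast at h; lia
      all_goals
        have : (a : ℤ) ≤ a * x ^ 2 := le_mul_of_one_le_right (by positivity) hx
        have : 0 ≤ (b : ℤ) * y ^ 2 := by positivity
        push_cast at h; lia
    subst ha1
    refine ⟨rfl, ?_⟩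
    have hb2 : b ≤ 2 := by
      obtain ⟨x, y, z, w, h⟩ := H 2
      have := hq z w
      rcases hsq y with hy | hy
      · -- `x² = 2 - 4q` has no solution
        exfalso
        rw [hy] at h
        push_cast at h
        rcases Int.even_or_odd' x with ⟨x, rfl | rfl⟩ <;> ring_nf at h <;> lia
      · have : (b : ℤ) ≤ b * y ^ 2 := le_mul_of_one_le_right (by positivity) hy
        have := sq_nonneg x
        push_cast at h; lia
    have hb1 : b ≠ 1 := by
      rintro rfl
      obtain ⟨x, y, z, w, h⟩ := H 3
      push_cast at h
      rcases Int.even_or_odd' x with ⟨x, rfl | rfl⟩ <;>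
        rcases Int.even_or_odd' y with ⟨y, rfl | rfl⟩ <;> ring_nf at h <;> lia
    lia
  · rintro ⟨rfl, rfl⟩ n
    obtain ⟨x, y, s, t, h⟩ := exists_one_two_four_twelve n
    exact ⟨x, y, s - t, 2 * t, by rw [h]; push_cast; ring⟩
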